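/- Let μ̌ ∈ 𝒫(ℝ)^{dT} satisfy ℳ(μ̌) ≠ ∅, let μ̌ⁿ = (μ^n_{t,i}) satisfy r_n := 2 max_{1≤t≤T} Σ_{1≤i≤d} 𝒲₁(μ^n_{t,i}, μ_{t,i}) → 0, let c be Lipschitz, and let (ε_n)_{n≥1} converge to zero with ε_n ≥ r_n for all n. Then for each n ≥ 1 the problem P̄_{ε_n}(μ̌ⁿ) (respectively P̲_{ε_n}(μ̌ⁿ)) admits an optimizer π_n; the sequence (π_n)_{n≥1} is tight, and every weak limit point of (π_n)_{n≥1} is an optimizer for P̄(μ̌) (respectively P̲(μ̌)). In particular, (π_n)_{n≥1} converges weakly whenever P̄(μ̌) (respectively P̲(μ̌)) has a unique optimizer. -/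

import Mathlib

open MeasureTheory Filter

namespace MMOT

/-- Path space `𝒳 = (ℝ^d)^T`. -/
abbrev Path (T d : ℕ) := Fin T → Fin d → ℝ

/-- σ-algebra generated by the coordinates `X_0, …, X_t` (0-indexed). -/
noncomputable def pastSigma (T d : ℕ) (t : ℕ) : MeasurableSpace (Path T d) :=
  ⨆ s : Fin T, ⨆ _ : (s : ℕ) ≤ t, MeasurableSpace.comap (fun x => x s) inferInstance

def HasMarginals {T d : ℕ} (π : Measure (Path T d)) (μ : Fin T → Fin d → Measure ℝ) : Prop :=
  ∀ t i, π.map (fun x => x t i) = μ t i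

/-- `E_π[X_{t+1,i} | X_0,…,X_t]`. -/
noncomputable def condNext {T d : ℕ} (π : Measure (Path T d)) (t : ℕ) (ht : t + 1 < T)
    (i : Fin d) : Path T d → ℝ :=
  π[fun x => x ⟨t + 1, ht⟩ i | pastSigma T d t]

def IsMartingaleMeasure {T d : ℕ} (π : Measure (Path T d)) : Prop :=
  ∀ (t : ℕ) (ht : t + 1 < T) (i : Fin d),
    condNext π t ht i =ᵐ[π] fun x => x ⟨t, Nat.lt_of_succ_lt ht⟩ i

/-- The set `ℳ(μ̌)` of calibrated martingale measures. -/
def MartSet {T d : ℕ} (μ : Fin T → Fin d → Measure ℝ) : Set (Measure (Path T d)) :=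
  {π | IsProbabilityMeasure π ∧ HasMarginals π μ ∧ IsMartingaleMeasure π}

/-- The relaxed set `ℳ_ε(μ̌)`: calibrated measures whose martingale defect is at most `ε`. -/
def MartSetEps {T d : ℕ} (μ : Fin T → Fin d → Measure ℝ) (ε : ℝ) :
    Set (Measure (Path T d)) :=
  {π | IsProbabilityMeasure π ∧ HasMarginals π μ ∧
    ∀ (t : ℕ) (ht : t + 1 < T),
      ∫ x, ∑ i, |condNext π t ht i x - x ⟨t, Nat.lt_of_succ_lt ht⟩ i| ∂π ≤ ε}

def primalVals {T d : ℕ} (c : Path T d → ℝ) (S : Set (Measure (Path T d))) : Set ℝ :=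
  {r | ∃ π ∈ S, Integrable c π ∧ r = ∫ x, c x ∂π}

noncomputable def PbarEps {T d : ℕ} (μ : Fin T → Fin d → Measure ℝ) (c : Path T d → ℝ)
    (ε : ℝ) : ℝ :=
  sSup (primalVals c (MartSetEps μ ε))

noncomputable def PlowEps {T d : ℕ} (μ : Fin T → Fin d → Measure ℝ) (c : Path T d → ℝ)
    (ε : ℝ) : ℝ :=
  sInf (primalVals c (MartSetEps μ ε))

noncomputable def Pbar {T d : ℕ} (μ : Fin T → Fin d → Measure ℝ) (c : Path T d → ℝ) : ℝ :=
  sSup (primalVals c (MartSet μ))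

noncomputable def Plow {T d : ℕ} (μ : Fin T → Fin d → Measure ℝ) (c : Path T d → ℝ) : ℝ :=
  sInf (primalVals c (MartSet μ))

/-- Wasserstein-1 distance on probability measures on `ℝ`. -/
noncomputable def W1R (μ ν : Measure ℝ) : ℝ :=
  sInf {r | ∃ γ : Measure (ℝ × ℝ), IsProbabilityMeasure γ ∧ γ.map Prod.fst = μ ∧
    γ.map Prod.snd = ν ∧ Integrable (fun p => |p.1 - p.2|) γ ∧
    r = ∫ p, |p.1 - p.2| ∂γ}

/-- Lipschitz continuity with respect to the `ℓ¹`-norm on the path space. -/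
def LipschitzCost {T d : ℕ} (L : ℝ) (c : Path T d → ℝ) : Prop :=
  ∀ x y, |c x - c y| ≤ L * ∑ t, ∑ i, |x t i - y t i|

/-- Weak convergence of a sequence of measures (testing against bounded continuous functions). -/
def WeakTendsto {T d : ℕ} (πs : ℕ → Measure (Path T d)) (π : Measure (Path T d)) : Prop :=
  ∀ f : BoundedContinuousFunction (Path T d) ℝ,
    Tendsto (fun n => ∫ x, f x ∂(πs n)) atTop (nhds (∫ x, f x ∂π))

/-- `π` is a weak limit point of the sequence `πs`. -/
def WeakLimitPoint {T d : ℕ} (πs : ℕ → Measure (Path T d)) (π : Measure (Path T d)) : Prop :=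
  ∃ φ : ℕ → ℕ, StrictMono φ ∧ WeakTendsto (πs ∘ φ) π

/-- Tightness of a sequence of measures. -/
def Tight {T d : ℕ} (πs : ℕ → Measure (Path T d)) : Prop :=
  ∀ δ : ℝ, 0 < δ → ∃ K : Set (Path T d), IsCompact K ∧ ∀ n, πs n Kᶜ ≤ ENNReal.ofReal δ

section

def cut (T d t : ℕ) (x : Path T d) : Path T d := fun s => if (s : ℕ) ≤ t then x s else 0

lemma cut_continuous (T d t : ℕ) : Continuous (cut T d t) := by
  refine continuous_pi fun s => ?_
  by_cases h : (s : ℕ) ≤ t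
  · simp only [cut, h, if_true]; fun_prop
  · simp only [cut, h, if_false]; fun_prop

lemma cut_measurable (T d t : ℕ) : Measurable (cut T d t) := (cut_continuous T d t).measurable

lemma pastSigma_eq (T d t : ℕ) :
    pastSigma T d t = MeasurableSpace.comap (cut T d t) inferInstance := by
  show _ = MeasurableSpace.comap (cut T d t) MeasurableSpace.pi
  unfold pastSigma MeasurableSpace.pi
  rw [MeasurableSpace.comap_iSup]
  refine iSup_congr fun s => ?_
  rw [MeasurableSpace.comap_comp]
  by_cases h : (s : ℕ) ≤ t
  · simp only [h, iSup_pos]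
    congr 1
    ext x
    simp [cut, h]
  · have : ((fun b : Path T d => b s) ∘ cut T d t) = fun _ => 0 := by
      ext x
      simp [cut, h]
    rw [this, MeasurableSpace.comap_const]
    simp [h]

lemma pastSigma_le (T d t : ℕ) : pastSigma T d t ≤ MeasurableSpace.pi := by
  rw [pastSigma_eq]
  exact (cut_measurable T d t).comap_le

def clip (R y : ℝ) : ℝ := max (-R) (min R y)

lemma clip_continuous (R : ℝ) : Continuous (clip R) := by unfold clip; fun_prop

lemma abs_clip_le {R : ℝ} (hR : 0 ≤ R) (y : ℝ) : |clip R y| ≤ R := by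
  unfold clip
  rw [abs_le]
  exact ⟨le_max_left _ _, max_le (by linarith) (min_le_left _ _)⟩

lemma abs_sub_clip {R : ℝ} (hR : 0 ≤ R) (y : ℝ) : |y - clip R y| = max (|y| - R) 0 := by
  unfold clip
  rcases le_total 0 y with h | h <;> rcases le_total R |y| with h2 | h2
  · rw [abs_of_nonneg h] at *
    rw [min_eq_left h2, max_eq_right (by linarith), max_eq_left (by linarith), abs_of_nonneg (by linarith)]
  · rw [abs_of_nonneg h] at *
    rw [min_eq_right h2, max_eq_right (by linarith), max_eq_right (by linarith)]; simp
  · rw [abs_of_nonpos h] at *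
    rw [min_eq_right (by linarith), max_eq_left (by linarith), max_eq_left (by linarith), abs_of_nonpos (by linarith)]
    ring
  · rw [abs_of_nonpos h] at *
    rw [min_eq_right (by linarith), max_eq_right (by linarith), max_eq_right (by linarith)]; simp

lemma clip_of_abs_le {R y : ℝ} (h : |y| ≤ R) : clip R y = y := by
  unfold clip
  rw [abs_le] at h
  rw [min_eq_right h.2, max_eq_right h.1]

lemma clip_lip (R x y : ℝ) : |clip R x - clip R y| ≤ |x - y| := by
  unfold clip
  refine (abs_max_sub_max_le_max _ _ _ _).trans ?_
  simp only [sub_self, abs_zero, abs_nonneg, sup_of_le_right]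
  refine (abs_min_sub_min_le_max _ _ _ _).trans ?_
  simp

variable {T d : ℕ}

lemma int_cut_mul {π : Measure (Path T d)} [IsProbabilityMeasure π] {Y : Path T d → ℝ}
    (hY : Integrable Y π) {h : Path T d → ℝ} (hm : Measurable h) (hb : ∀ x, |h x| ≤ 1) (t : ℕ) :
    Integrable (fun x => h (cut T d t x) * Y x) π :=
  hY.bdd_mul (c := 1) ((hm.comp (cut_measurable T d t)).aestronglyMeasurable)
    (ae_of_all _ fun x => by simpa using hb _)

lemma approx_test {π : Measure (Path T d)} [IsProbabilityMeasure π] {Y : Path T d → ℝ}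
    (hY : Integrable Y π) (hYm : Measurable Y) {g : Path T d → ℝ} (hm : Measurable g)
    (hb : ∀ x, |g x| ≤ 1) (t : ℕ) {δ : ℝ} (hδ : 0 < δ) :
    ∃ h : Path T d → ℝ, Continuous h ∧ (∀ x, |h x| ≤ 1) ∧
      ∫ x, g (cut T d t x) * Y x ∂π ≤ ∫ x, h (cut T d t x) * Y x ∂π + δ := by
  have hfin : IsFiniteMeasure (π.withDensity fun x => ENNReal.ofReal (|Y x|)) :=
    isFiniteMeasure_withDensity_ofReal hY.abs.2
  set ν := (π.withDensity fun x => ENNReal.ofReal (|Y x|)).map (cut T d t) with hν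
  have hgi : Integrable g ν :=
    Integrable.of_bound hm.aestronglyMeasurable 1 (ae_of_all _ fun x => by simpa using hb x)
  obtain ⟨h0, hh0, hh0i⟩ := hgi.exists_boundedContinuous_integral_sub_le hδ
  refine ⟨fun x => clip 1 (h0 x), (clip_continuous 1).comp h0.continuous,
    fun x => abs_clip_le zero_le_one _, ?_⟩
  have hcm : Measurable (fun x => clip 1 (h0 x)) :=
    ((clip_continuous 1).comp h0.continuous).measurable
  have e1 : ∫ x, ‖g x - h0 x‖ ∂ν = ∫ x, |Y x| * |g (cut T d t x) - h0 (cut T d t x)| ∂π := by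
    rw [hν, integral_map (cut_measurable T d t).aemeasurable, integral_withDensity_eq_integral_toReal_smul]
    · refine integral_congr_ae (ae_of_all _ fun x => ?_)
      simp [ENNReal.toReal_ofReal]
    · fun_prop
    · exact ae_of_all _ fun x => ENNReal.ofReal_lt_top
    · exact ((hm.sub h0.continuous.measurable).norm).aestronglyMeasurable
  have i1 := int_cut_mul hY hm hb t
  have i2 := int_cut_mul hY hcm (fun x => abs_clip_le zero_le_one _) t
  have : ∫ x, g (cut T d t x) * Y x ∂π - ∫ x, clip 1 (h0 (cut T d t x)) * Y x ∂π ≤ 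
      ∫ x, |Y x| * |g (cut T d t x) - h0 (cut T d t x)| ∂π := by
    rw [← integral_sub i1 i2]
    refine integral_mono (i1.sub i2) ?_ ?_
    · have := hY.abs.mul_bdd (c := 1 + ‖h0‖) (g := fun x => |g (cut T d t x) - h0 (cut T d t x)|)
        (((hm.sub h0.continuous.measurable).comp (cut_measurable T d t)).norm.aestronglyMeasurable)
        (ae_of_all _ fun x => by
          rw [Real.norm_eq_abs, abs_abs]
          refine (abs_sub _ _).trans (add_le_add (hb _) (h0.norm_coe_le_norm _)))
      exact this
    · intro x
      simp only
      rw [← sub_mul, mul_comm]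
      refine (le_abs_self _).trans ?_
      rw [abs_mul]
      refine mul_le_mul_of_nonneg_left ?_ (abs_nonneg _)
      conv_lhs => rw [← clip_of_abs_le (hb (cut T d t x))]
      exact clip_lip _ _ _
  linarith

/-- increment -/
def incr (t : ℕ) (ht : t + 1 < T) (i : Fin d) (x : Path T d) : ℝ :=
  x ⟨t + 1, ht⟩ i - x ⟨t, Nat.lt_of_succ_lt ht⟩ i

lemma incr_cont (t : ℕ) (ht : t + 1 < T) (i : Fin d) : Continuous (incr t ht i) := by
  unfold incr; fun_prop

lemma incr_int {π : Measure (Path T d)} (hi : ∀ t i, Integrable (fun x : Path T d => x t i) π)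
   (t : ℕ) (ht : t + 1 < T) (i : Fin d) : Integrable (incr t ht i) π := (hi _ _).sub (hi _ _)

lemma coord_past (t : ℕ) (ht : t < T) (i : Fin d) :
    StronglyMeasurable[pastSigma T d t] (fun x : Path T d => x ⟨t, ht⟩ i) := by
  apply Measurable.stronglyMeasurable
  rw [pastSigma_eq]
  have : (fun x : Path T d => x ⟨t, ht⟩ i) = (fun x : Path T d => x ⟨t, ht⟩ i) ∘ cut T d t := by
    ext x; simp [cut]
  rw [this]
  exact Measurable.comp (by fun_prop) (comap_measurable (cut T d t))

lemma test_eq {π : Measure (Path T d)} [IsProbabilityMeasure π]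
    (hi : ∀ t i, Integrable (fun x : Path T d => x t i) π) (t : ℕ) (ht : t + 1 < T) (i : Fin d)
    {h : Path T d → ℝ} (hm : Measurable h) (hb : ∀ x, |h x| ≤ 1) :
    ∫ x, h (cut T d t x) * incr t ht i x ∂π =
      ∫ x, h (cut T d t x) * (condNext π t ht i x - x ⟨t, Nat.lt_of_succ_lt ht⟩ i) ∂π := by
  have i1 := int_cut_mul (hi ⟨t + 1, ht⟩ i) hm hb t
  have i2 := int_cut_mul (hi ⟨t, Nat.lt_of_succ_lt ht⟩ i) hm hb t
  have i3 : Integrable (fun x => h (cut T d t x) * condNext π t ht i x) π :=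
    int_cut_mul (Y := condNext π t ht i) integrable_condExp hm hb t
  simp only [incr, mul_sub]
  rw [integral_sub i1 i2, integral_sub i3 i2]
  congr 1
  have hsm : StronglyMeasurable[pastSigma T d t] (fun x => h (cut T d t x)) := by
    apply Measurable.stronglyMeasurable
    rw [pastSigma_eq]
    exact hm.comp (comap_measurable (cut T d t))
  have := condExp_mul_of_stronglyMeasurable_left (μ := π) hsm i1 (hi ⟨t + 1, ht⟩ i)
  have e := integral_congr_ae this
  rw [integral_condExp (pastSigma_le T d t)] at e
  exact e

lemma cond_int {π : Measure (Path T d)} [IsProbabilityMeasure π]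
    (hi : ∀ t i, Integrable (fun x : Path T d => x t i) π) (t : ℕ) (ht : t + 1 < T) (i : Fin d) :
    Integrable (fun x => condNext π t ht i x - x ⟨t, Nat.lt_of_succ_lt ht⟩ i) π :=
  Integrable.sub integrable_condExp (hi _ i)

lemma test_le {π : Measure (Path T d)} [IsProbabilityMeasure π]
    (hi : ∀ t i, Integrable (fun x : Path T d => x t i) π) (t : ℕ) (ht : t + 1 < T) 
    {h : Fin d → Path T d → ℝ} (hm : ∀ i, Measurable (h i)) (hb : ∀ i x, |h i x| ≤ 1) :
    ∑ i, ∫ x, h i (cut T d t x) * incr t ht i x ∂π ≤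
      ∫ x, ∑ i, |condNext π t ht i x - x ⟨t, Nat.lt_of_succ_lt ht⟩ i| ∂π := by
  rw [integral_finsetSum _ fun i _ => (cond_int hi t ht i).abs]
  refine Finset.sum_le_sum fun i _ => ?_
  rw [test_eq hi t ht i (hm i) (hb i)]
  refine integral_mono (int_cut_mul (cond_int hi t ht i) (hm i) (hb i) t) (cond_int hi t ht i).abs ?_
  intro x
  refine (le_abs_self _).trans ?_
  simp only [abs_mul]
  exact mul_le_of_le_one_left (abs_nonneg _) (hb _ _)

lemma defect_le {π : Measure (Path T d)} [IsProbabilityMeasure π]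
    (hi : ∀ t i, Integrable (fun x : Path T d => x t i) π) (t : ℕ) (ht : t + 1 < T) {ε : ℝ}
    (H : ∀ h : Fin d → Path T d → ℝ, (∀ i, Continuous (h i)) → (∀ i x, |h i x| ≤ 1) →
      ∑ i, ∫ x, h i (cut T d t x) * incr t ht i x ∂π ≤ ε) :
    ∫ x, ∑ i, |condNext π t ht i x - x ⟨t, Nat.lt_of_succ_lt ht⟩ i| ∂π ≤ ε := by
  have key : ∀ i, ∃ g : Path T d → ℝ, Measurable g ∧ (∀ x, |g x| ≤ 1) ∧
      ∫ x, |condNext π t ht i x - x ⟨t, Nat.lt_of_succ_lt ht⟩ i| ∂π =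
        ∫ x, g (cut T d t x) * incr t ht i x ∂π := by
    intro i
    have hZ : StronglyMeasurable[pastSigma T d t]
      (fun x => condNext π t ht i x - x ⟨t, Nat.lt_of_succ_lt ht⟩ i) :=
      StronglyMeasurable.sub stronglyMeasurable_condExp (coord_past t _ i)
    set Z := (fun x => condNext π t ht i x - x ⟨t, Nat.lt_of_succ_lt ht⟩ i) with hZdef
    have hZm := hZ.measurable
    rw [pastSigma_eq] at hZm
    obtain ⟨z, hz, hzZ⟩ := hZm.exists_eq_measurable_comp
    have hg : Measurable (fun y => if 0 ≤ z y then (1 : ℝ) else -1) :=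
      Measurable.ite (measurableSet_le measurable_const hz) measurable_const measurable_const
    have hgb : ∀ y, |if 0 ≤ z y then (1 : ℝ) else -1| ≤ 1 := by
      intro y; split_ifs <;> simp
    refine ⟨fun y => if 0 ≤ z y then 1 else -1, hg, hgb, ?_⟩
    rw [test_eq hi t ht i hg hgb]
    refine integral_congr_ae (ae_of_all _ fun x => ?_)
    have e : condNext π t ht i x - x ⟨t, Nat.lt_of_succ_lt ht⟩ i = z (cut T d t x) := congrFun hzZ x
    simp only [e]
    split_ifs with h0
    · rw [abs_of_nonneg h0]; ring
    · rw [abs_of_neg (not_le.1 h0)]; ring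
  choose g hgm hgb hge using key
  rw [integral_finsetSum _ fun i _ => (cond_int hi t ht i).abs]
  refine le_of_forall_pos_le_add fun δ hδ => ?_
  have hδ' : 0 < δ / (d + 1) := by positivity
  choose h hc hb hle using fun i =>
    approx_test (incr_int hi t ht i) (incr_cont t ht i).measurable (hgm i) (hgb i) t hδ'
  calc _ = ∑ i, ∫ x, g i (cut T d t x) * incr t ht i x ∂π := Finset.sum_congr rfl fun i _ => hge i
    _ ≤ ∑ i, (∫ x, h i (cut T d t x) * incr t ht i x ∂π + δ / (d + 1)) :=
      Finset.sum_le_sum fun i _ => hle i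
    _ = ∑ i, ∫ x, h i (cut T d t x) * incr t ht i x ∂π + d * (δ / (d + 1)) := by
      rw [Finset.sum_add_distrib]; simp
    _ ≤ ε + δ := by
      refine add_le_add (H h hc hb) ?_
      rw [mul_div_assoc', div_le_iff₀ (by positivity)]
      nlinarith

lemma mart_of_eps {π : Measure (Path T d)} {μ : Fin T → Fin d → Measure ℝ}
    (hi : ∀ t i, Integrable (fun x : Path T d => x t i) π) (h : π ∈ MartSetEps μ 0) :
    π ∈ MartSet μ := by
  obtain ⟨hp, hm, hd⟩ := h
  refine ⟨hp, hm, fun t ht i => ?_⟩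
  have h0 := hd t ht
  have hnn : 0 ≤ fun x => ∑ i, |condNext π t ht i x - x ⟨t, Nat.lt_of_succ_lt ht⟩ i| :=
    fun x => Finset.sum_nonneg fun i _ => abs_nonneg _
  have h1 := (integral_eq_zero_iff_of_nonneg hnn
    (integrable_finsetSum _ fun i _ => (cond_int hi t ht i).abs)).1 (le_antisymm h0 (integral_nonneg hnn))
  filter_upwards [h1] with x hx
  have := (Finset.sum_eq_zero_iff_of_nonneg (fun i _ => abs_nonneg _)).1 hx i (Finset.mem_univ i)
  rw [abs_eq_zero] at this
  linarith

lemma mart_test {π : Measure (Path T d)} [IsProbabilityMeasure π]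
    (hi : ∀ t i, Integrable (fun x : Path T d => x t i) π) (hM : IsMartingaleMeasure π)
    (t : ℕ) (ht : t + 1 < T) (i : Fin d)
    {h : Path T d → ℝ} (hm : Measurable h) (hb : ∀ x, |h x| ≤ 1) :
    ∫ x, h (cut T d t x) * incr t ht i x ∂π = 0 := by
  rw [test_eq hi t ht i hm hb]
  rw [integral_eq_zero_of_ae]
  filter_upwards [hM t ht i] with x hx
  simp [hx]


end

section
variable {T d : ℕ}

lemma coord_meas (t : Fin T) (i : Fin d) : Measurable (fun x : Path T d => x t i) := by fun_prop

lemma marg_integrable {π : Measure (Path T d)} {μ : Fin T → Fin d → Measure ℝ}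
    (hM : HasMarginals π μ) {g : ℝ → ℝ} (hg : Continuous g) {t : Fin T} {i : Fin d}
    (h : Integrable g (μ t i)) : Integrable (fun x : Path T d => g (x t i)) π := by
  rw [← hM t i] at h
  exact (integrable_map_measure hg.aestronglyMeasurable (coord_meas t i).aemeasurable).1 h

lemma marg_integral {π : Measure (Path T d)} {μ : Fin T → Fin d → Measure ℝ}
    (hM : HasMarginals π μ) {g : ℝ → ℝ} (hg : Continuous g) (t : Fin T) (i : Fin d) :
    ∫ x, g (x t i) ∂π = ∫ y, g y ∂(μ t i) := by
  rw [← hM t i, integral_map (coord_meas t i).aemeasurable hg.aestronglyMeasurable]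

def KR (ν ν' : Measure ℝ) (a : ℝ) : Prop :=
  ∀ g : ℝ → ℝ, (∀ x y, |g x - g y| ≤ |x - y|) → |∫ y, g y ∂ν - ∫ y, g y ∂ν'| ≤ a

lemma lip_cont {g : ℝ → ℝ} (h : ∀ x y, |g x - g y| ≤ |x - y|) : Continuous g :=
  (LipschitzWith.of_dist_le_mul (K := 1) (fun x y => by simpa [Real.dist_eq] using h x y)).continuous

lemma lip_int {g : ℝ → ℝ} (h : ∀ x y, |g x - g y| ≤ |x - y|) {ν : Measure ℝ}
    [IsProbabilityMeasure ν] (hν : Integrable (fun y : ℝ => y) ν) : Integrable g ν := by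
  refine ((integrable_const |g 0|).add hν.abs).mono' (lip_cont h).aestronglyMeasurable
    (ae_of_all _ fun y => ?_)
  have := h y 0
  have h2 := abs_sub_abs_le_abs_sub (g y) (g 0)
  simp at this ⊢
  linarith

def tl (R y : ℝ) : ℝ := max (|y| - R) 0

lemma tl_lip (R x y : ℝ) : |tl R x - tl R y| ≤ |x - y| := by
  unfold tl
  refine (abs_max_sub_max_le_max _ _ _ _).trans ?_
  simp only [sub_self, abs_zero, abs_nonneg, sup_of_le_left, sub_sub_sub_cancel_right]
  exact abs_abs_sub_abs_le _ _

lemma tl_nonneg (R x : ℝ) : 0 ≤ tl R x := le_max_right _ _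

lemma tl_le {R : ℝ} (hR : 0 ≤ R) (x : ℝ) : tl R x ≤ |x| :=
  max_le (by linarith) (abs_nonneg _)

lemma tl_tendsto {ν : Measure ℝ} (hν : Integrable (fun y : ℝ => y) ν) :
    Tendsto (fun n : ℕ => ∫ y, tl n y ∂ν) atTop (nhds 0) := by
  have : (0 : ℝ) = ∫ y, (0 : ℝ) ∂ν := by simp
  rw [this]
  refine tendsto_integral_of_dominated_convergence (fun y => |y|)
    (fun n => (lip_cont (tl_lip n)).aestronglyMeasurable) hν.abs
    (fun n => ae_of_all _ fun y => ?_) (ae_of_all _ fun y => ?_)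
  · rw [Real.norm_eq_abs, abs_of_nonneg (tl_nonneg _ _)]
    exact tl_le (Nat.cast_nonneg n) y
  · obtain ⟨N, hN⟩ := exists_nat_ge |y|
    refine tendsto_const_nhds.congr' ?_
    filter_upwards [eventually_ge_atTop N] with n hn
    have : (N : ℝ) ≤ n := by exact_mod_cast hn
    unfold tl
    rw [max_eq_right]; linarith

def ST (R : ℝ) (x : Path T d) : ℝ := ∑ t, ∑ i, tl R (x t i)

lemma ST_nonneg (R : ℝ) (x : Path T d) : 0 ≤ ST R x :=
  Finset.sum_nonneg fun _ _ => Finset.sum_nonneg fun _ _ => tl_nonneg _ _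

lemma tl_le_ST (R : ℝ) (x : Path T d) (t : Fin T) (i : Fin d) : tl R (x t i) ≤ ST R x :=
  (Finset.single_le_sum (f := fun i => tl R (x t i)) (fun _ _ => tl_nonneg _ _)
    (Finset.mem_univ i)).trans
  (Finset.single_le_sum (f := fun t => ∑ i, tl R (x t i))
    (fun _ _ => Finset.sum_nonneg fun _ _ => tl_nonneg _ _) (Finset.mem_univ t))

lemma ST_int {π : Measure (Path T d)} {μ : Fin T → Fin d → Measure ℝ}
    (hp : ∀ t i, IsProbabilityMeasure (μ t i))
    (hM : HasMarginals π μ) (hmom : ∀ t i, Integrable (fun y : ℝ => y) (μ t i)) (R : ℝ) :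
    Integrable (ST R) π :=
  integrable_finsetSum _ fun t _ => integrable_finsetSum _ fun i _ =>
    marg_integrable hM (lip_cont (tl_lip R)) (lip_int (tl_lip R) (hmom t i))

lemma ST_integral {π : Measure (Path T d)} {μ : Fin T → Fin d → Measure ℝ}
    (hp : ∀ t i, IsProbabilityMeasure (μ t i))
    (hM : HasMarginals π μ) (hmom : ∀ t i, Integrable (fun y : ℝ => y) (μ t i)) (R : ℝ) :
    ∫ x, ST R x ∂π = ∑ t, ∑ i, ∫ y, tl R y ∂(μ t i) := by
  have h : ∀ t i, Integrable (fun x : Path T d => tl R (x t i)) π := fun t i =>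
    marg_integrable hM (lip_cont (tl_lip R)) (lip_int (tl_lip R) (hmom t i))
  unfold ST
  rw [integral_finsetSum _ fun t _ => integrable_finsetSum _ fun i _ => h t i]
  refine Finset.sum_congr rfl fun t _ => ?_
  rw [integral_finsetSum _ fun i _ => h t i]
  exact Finset.sum_congr rfl fun i _ => marg_integral hM (lip_cont (tl_lip R)) t i

lemma coord_int {π : Measure (Path T d)} {μ : Fin T → Fin d → Measure ℝ}
    (hM : HasMarginals π μ) (hmom : ∀ t i, Integrable (fun y : ℝ => y) (μ t i)) :
    ∀ t i, Integrable (fun x : Path T d => x t i) π := fun t i =>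
  marg_integrable hM continuous_id (hmom t i)

def Good (f : Path T d → ℝ) (A : ℝ) : Prop :=
  Continuous f ∧ 0 ≤ A ∧ ∀ R : ℝ, 0 ≤ R → ∃ g : BoundedContinuousFunction (Path T d) ℝ,
    ∀ x, |f x - g x| ≤ A * ST R x

lemma Good.integrable {f : Path T d → ℝ} {A : ℝ} (hf : Good f A)
    {π : Measure (Path T d)} [IsProbabilityMeasure π] {μ : Fin T → Fin d → Measure ℝ}
    (hp : ∀ t i, IsProbabilityMeasure (μ t i))
    (hM : HasMarginals π μ) (hmom : ∀ t i, Integrable (fun y : ℝ => y) (μ t i)) :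
    Integrable f π := by
  obtain ⟨g, hg⟩ := hf.2.2 0 le_rfl
  have h1 : Integrable (fun x => f x - g x) π :=
    ((ST_int hp hM hmom 0).const_mul A).mono' (hf.1.sub g.continuous).aestronglyMeasurable
      (ae_of_all _ hg)
  have := h1.add (g.integrable π)
  refine this.congr (ae_of_all _ fun x => by simp)

lemma conv_good {f : Path T d → ℝ} {A : ℝ} (hf : Good f A)
    {πs : ℕ → Measure (Path T d)} {π : Measure (Path T d)}
    (hpi : ∀ k, IsProbabilityMeasure (πs k)) (hpi0 : IsProbabilityMeasure π)
    {ν : ℕ → Fin T → Fin d → Measure ℝ} {μ : Fin T → Fin d → Measure ℝ}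
    (hpn : ∀ k t i, IsProbabilityMeasure (ν k t i))
    (hMn : ∀ k, HasMarginals (πs k) (ν k))
    (hmomn : ∀ k t i, Integrable (fun y : ℝ => y) (ν k t i))
    (hp : ∀ t i, IsProbabilityMeasure (μ t i))
    (hM : HasMarginals π μ) (hmom : ∀ t i, Integrable (fun y : ℝ => y) (μ t i))
    {a : ℕ → ℝ} (hkr : ∀ k t i, KR (ν k t i) (μ t i) (a k)) (ha : Tendsto a atTop (nhds 0))
    (hw : WeakTendsto πs π) :
    Tendsto (fun k => ∫ x, f x ∂(πs k)) atTop (nhds (∫ x, f x ∂π)) := by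
  have hS0 : Tendsto (fun n : ℕ => 2 * A * ∫ x, ST n x ∂π) atTop (nhds 0) := by
    simp only [ST_integral hp hM hmom]
    have := (tendsto_finsetSum (Finset.univ) fun t (_ : t ∈ Finset.univ) =>
      tendsto_finsetSum (Finset.univ) fun i (_ : i ∈ Finset.univ) =>
      tl_tendsto (hmom t i)).const_mul (2 * A)
    simpa using this
  rw [Metric.tendsto_atTop']
  intro δ hδ
  obtain ⟨n, hn⟩ := (hS0.eventually (gt_mem_nhds (half_pos hδ))).exists
  obtain ⟨g, hg⟩ := hf.2.2 n (Nat.cast_nonneg n)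
  have hSk : ∀ k, ∫ x, ST n x ∂(πs k) ≤ ∫ x, ST n x ∂π + T * d * a k := by
    intro k
    rw [ST_integral hp hM hmom, ST_integral (hpn k) (hMn k) (hmomn k)]
    have : ∑ t, ∑ i, ∫ y, tl n y ∂(ν k t i) ≤ ∑ t, ∑ i, (∫ y, tl n y ∂(μ t i) + a k) := by
      refine Finset.sum_le_sum fun t _ => Finset.sum_le_sum fun i _ => ?_
      have := (abs_le.1 (hkr k t i (tl n) (tl_lip n))).2
      linarith
    refine this.trans (le_of_eq ?_)
    simp [Finset.sum_add_distrib, mul_assoc]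
  have hlim : Tendsto (fun k => A * (T * d * a k) + |∫ x, g x ∂(πs k) - ∫ x, g x ∂π|) atTop
      (nhds 0) := by
    have h1 := (ha.const_mul (T * d : ℝ)).const_mul A
    have h2 := ((hw g).sub_const (∫ x, g x ∂π)).abs
    have := h1.add h2
    simpa using this
  have herr : ∀ (ρ : Measure (Path T d)) (_ : IsProbabilityMeasure ρ)
      (m : Fin T → Fin d → Measure ℝ) (_ : ∀ t i, IsProbabilityMeasure (m t i))
      (_ : HasMarginals ρ m) (_ : ∀ t i, Integrable (fun y : ℝ => y) (m t i)),
      |∫ x, f x ∂ρ - ∫ x, g x ∂ρ| ≤ A * ∫ x, ST n x ∂ρ := by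
    intro ρ _ m h1 h2 h3
    rw [← integral_sub (hf.integrable h1 h2 h3) (g.integrable ρ), ← integral_const_mul]
    have := norm_integral_le_of_norm_le (f := fun x => f x - g x) ((ST_int h1 h2 h3 n).const_mul A) (ae_of_all _ fun x => hg x)
    exact this
  obtain ⟨N, hN⟩ := eventually_atTop.1 (hlim.eventually (gt_mem_nhds (half_pos hδ)))
  refine ⟨N, fun k hk => ?_⟩
  have e1 := herr (πs k) (hpi k) (ν k) (hpn k) (hMn k) (hmomn k)
  have e2 := herr π hpi0 μ hp hM hmom
  have e3 := hN k hk.le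
  have e4 := mul_le_mul_of_nonneg_left (hSk k) hf.2.1
  rw [Real.dist_eq]
  have e5 : |∫ x, f x ∂(πs k) - ∫ x, f x ∂π| ≤ |∫ x, f x ∂(πs k) - ∫ x, g x ∂(πs k)|
      + |∫ x, g x ∂(πs k) - ∫ x, g x ∂π| + |∫ x, f x ∂π - ∫ x, g x ∂π| := by
    rw [abs_sub_comm (∫ x, f x ∂π)]
    refine le_trans (le_of_eq ?_) (abs_add_three _ _ _)
    congr 1; ring
  rw [mul_add] at e4
  linarith

lemma good_of_lip {c : Path T d → ℝ} {L : ℝ} (hL : 0 ≤ L) (hc : LipschitzCost L c) : Good c L := by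
  have hcont : Continuous c := by
    rw [continuous_iff_continuousAt]
    intro x
    rw [ContinuousAt, tendsto_iff_dist_tendsto_zero]
    have h : Tendsto (fun y : Path T d => L * ∑ t, ∑ i, |y t i - x t i|) (nhds x) (nhds 0) := by
      have : Continuous (fun y : Path T d => L * ∑ t, ∑ i, |y t i - x t i|) := by fun_prop
      have h := this.tendsto x
      simpa using h
    exact squeeze_zero (fun _ => dist_nonneg) (fun y => hc y x) h
  refine ⟨hcont, hL, fun R hR => ?_⟩
  have hcl : Continuous (fun x : Path T d => c (fun t i => clip R (x t i))) := by
    refine hcont.comp (continuous_pi fun t => continuous_pi fun i => ?_)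
    exact (clip_continuous R).comp (by fun_prop)
  refine ⟨BoundedContinuousFunction.ofNormedAddCommGroup _ hcl (|c 0| + L * (T * (d * R))) ?_, ?_⟩
  · intro x
    have h1 := hc (fun t i => clip R (x t i)) 0
    have h2 : ∑ t : Fin T, ∑ i : Fin d, |clip R (x t i) - (0 : Path T d) t i| ≤
        ∑ t : Fin T, ∑ i : Fin d, R := Finset.sum_le_sum fun t _ => Finset.sum_le_sum fun i _ => by
      simpa using abs_clip_le hR (x t i)
    simp only [Finset.sum_const, Finset.card_univ, Fintype.card_fin, nsmul_eq_mul] at h2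
    have h3 := mul_le_mul_of_nonneg_left h2 hL
    have h4 := abs_sub_abs_le_abs_sub (c (fun t i => clip R (x t i))) (c 0)
    rw [Real.norm_eq_abs]
    linarith
  · intro x
    refine (hc _ _).trans (le_of_eq ?_)
    simp only [abs_sub_clip hR]
    rfl

lemma good_test {h : Path T d → ℝ} (hh : Continuous h) (hb : ∀ x, |h x| ≤ 1)
    (t : ℕ) (ht : t + 1 < T) (i : Fin d) :
    Good (fun x => h (cut T d t x) * incr t ht i x) 2 := by
  have hcut := cut_continuous T d t
  refine ⟨(hh.comp hcut).mul (incr_cont t ht i), by norm_num, fun R hR => ?_⟩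
  have hcl : Continuous (fun x : Path T d => h (cut T d t x) *
      (clip R (x ⟨t + 1, ht⟩ i) - clip R (x ⟨t, Nat.lt_of_succ_lt ht⟩ i))) := by
    refine (hh.comp hcut).mul (Continuous.sub ?_ ?_) <;>
    exact (clip_continuous R).comp (by fun_prop)
  refine ⟨BoundedContinuousFunction.ofNormedAddCommGroup _ hcl (R + R) ?_, ?_⟩
  · intro x
    rw [Real.norm_eq_abs, abs_mul]
    refine (mul_le_of_le_one_left (abs_nonneg _) (hb _)).trans ?_
    exact (abs_sub _ _).trans (add_le_add (abs_clip_le hR _) (abs_clip_le hR _))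
  · intro x
    show |h (cut T d t x) * incr t ht i x - h (cut T d t x) *
      (clip R (x ⟨t + 1, ht⟩ i) - clip R (x ⟨t, Nat.lt_of_succ_lt ht⟩ i))| ≤ _
    rw [← mul_sub, abs_mul]
    refine (mul_le_of_le_one_left (abs_nonneg _) (hb _)).trans ?_
    unfold incr
    rw [sub_sub_sub_comm]
    refine (abs_sub _ _).trans ?_
    rw [abs_sub_clip hR, abs_sub_clip hR, two_mul]
    exact add_le_add (tl_le_ST R x _ _) (tl_le_ST R x _ _)

lemma weak_prob {πs : ℕ → Measure (Path T d)} {π : Measure (Path T d)}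
    (hpi : ∀ k, IsProbabilityMeasure (πs k)) (hw : WeakTendsto πs π) : IsProbabilityMeasure π := by
  have h := hw (BoundedContinuousFunction.const _ 1)
  simp at h
  constructor
  have h2 : (π.real Set.univ) = 1 := h.symm
  rw [Measure.real, ENNReal.toReal_eq_one_iff] at h2
  exact h2

lemma weak_marg {πs : ℕ → Measure (Path T d)} {π : Measure (Path T d)}
    (hpi : ∀ k, IsProbabilityMeasure (πs k)) (hpi0 : IsProbabilityMeasure π)
    {ν : ℕ → Fin T → Fin d → Measure ℝ} {μ : Fin T → Fin d → Measure ℝ}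
    (hpn : ∀ k t i, IsProbabilityMeasure (ν k t i))
    (hMn : ∀ k, HasMarginals (πs k) (ν k))
    (hp : ∀ t i, IsProbabilityMeasure (μ t i))
    {a : ℕ → ℝ} (hkr : ∀ k t i, KR (ν k t i) (μ t i) (a k)) (ha : Tendsto a atTop (nhds 0))
    (hw : WeakTendsto πs π) : HasMarginals π μ := by
  intro t i
  have hme : Continuous (fun x : Path T d => x t i) := by fun_prop
  have hpm : IsProbabilityMeasure (π.map (fun x => x t i)) :=
    Measure.isProbabilityMeasure_map hme.aemeasurable
  let P : ℕ → ProbabilityMeasure ℝ := fun k => ⟨ν k t i, hpn k t i⟩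
  let Q : ProbabilityMeasure ℝ := ⟨μ t i, hp t i⟩
  let Q' : ProbabilityMeasure ℝ := ⟨π.map (fun x => x t i), hpm⟩
  have h1 : Tendsto P atTop (nhds Q) := by
    rw [tendsto_iff_forall_lipschitz_integral_tendsto]
    rintro f - ⟨L, hL⟩
    rw [tendsto_iff_dist_tendsto_zero]
    have h0 : Tendsto (fun k => (L + 1) * a k) atTop (nhds 0) := by
      simpa using ha.const_mul ((L : ℝ) + 1)
    refine squeeze_zero (fun _ => dist_nonneg) (fun k => ?_) h0
    have hLp : (0 : ℝ) < L + 1 := by positivity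
    have := hkr k t i (fun y => f y / (L + 1)) (fun x y => by
      rw [← sub_div, abs_div, abs_of_pos hLp, div_le_iff₀ hLp]
      have := hL.dist_le_mul x y
      rw [Real.dist_eq, Real.dist_eq] at this
      nlinarith [abs_nonneg (x - y)])
    rw [integral_div, integral_div, ← sub_div, abs_div, abs_of_pos hLp, div_le_iff₀ hLp] at this
    rw [Real.dist_eq, mul_comm]
    exact this
  have h2 : Tendsto P atTop (nhds Q') := by
    rw [ProbabilityMeasure.tendsto_iff_forall_integral_tendsto]
    intro f
    have := hw (f.compContinuous ⟨_, hme⟩)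
    simp only [ProbabilityMeasure.coe_mk, P, Q']
    rw [integral_map hme.aemeasurable f.continuous.aestronglyMeasurable]
    simp only [← marg_integral (hMn _) f.continuous]
    exact this
  exact congrArg (fun p : ProbabilityMeasure ℝ => (p : Measure ℝ)) (tendsto_nhds_unique h2 h1)

lemma weak_closed {πs : ℕ → Measure (Path T d)} {π : Measure (Path T d)}
    {ν : ℕ → Fin T → Fin d → Measure ℝ} {μ : Fin T → Fin d → Measure ℝ}
    {ε : ℕ → ℝ} {ε0 : ℝ} (hmem : ∀ k, πs k ∈ MartSetEps (ν k) (ε k))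
    (hε : Tendsto ε atTop (nhds ε0))
    (hpn : ∀ k t i, IsProbabilityMeasure (ν k t i))
    (hmomn : ∀ k t i, Integrable (fun y : ℝ => y) (ν k t i))
    (hp : ∀ t i, IsProbabilityMeasure (μ t i))
    (hmom : ∀ t i, Integrable (fun y : ℝ => y) (μ t i))
    {a : ℕ → ℝ} (hkr : ∀ k t i, KR (ν k t i) (μ t i) (a k)) (ha : Tendsto a atTop (nhds 0))
    (hw : WeakTendsto πs π) : π ∈ MartSetEps μ ε0 ∧ ∀ {f : Path T d → ℝ} {A : ℝ}, Good f A →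
      Integrable f π ∧ Tendsto (fun k => ∫ x, f x ∂(πs k)) atTop (nhds (∫ x, f x ∂π)) := by
  have hpi : ∀ k, IsProbabilityMeasure (πs k) := fun k => (hmem k).1
  have hpi0 := weak_prob hpi hw
  have hMn : ∀ k, HasMarginals (πs k) (ν k) := fun k => (hmem k).2.1
  have hM := weak_marg hpi hpi0 hpn hMn hp hkr ha hw
  refine ⟨⟨hpi0, hM, fun t ht => ?_⟩, fun hf => ⟨hf.integrable hp hM hmom,
    conv_good hf hpi hpi0 hpn hMn hmomn hp hM hmom hkr ha hw⟩⟩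
  refine defect_le (coord_int hM hmom) t ht fun h hc hb => ?_
  have hl := tendsto_finsetSum (Finset.univ) fun i (_ : i ∈ Finset.univ) =>
    conv_good (good_test (hc i) (hb i) t ht i) hpi hpi0 hpn hMn hmomn hp hM hmom hkr ha hw
  refine le_of_tendsto_of_tendsto' hl hε fun k => ?_
  exact (test_le (coord_int (hMn k) (hmomn k)) t ht (fun i => (hc i).measurable) hb).trans
    ((hmem k).2.2 t ht)

lemma tight_of {πs : ℕ → Measure (Path T d)}
    (hpi : ∀ k, IsProbabilityMeasure (πs k))
    {ν : ℕ → Fin T → Fin d → Measure ℝ} 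
    (hpn : ∀ k t i, IsProbabilityMeasure (ν k t i))
    (hMn : ∀ k, HasMarginals (πs k) (ν k))
    (hmomn : ∀ k t i, Integrable (fun y : ℝ => y) (ν k t i)) {C : ℝ} 
    (hC : ∀ k t i, ∫ y, tl 0 y ∂(ν k t i) ≤ C) : Tight πs := by
  intro δ hδ
  set B : ℝ := T * (d * C) with hB
  have hle : ∀ k, ∫ x, ST 0 x ∂(πs k) ≤ B := by
    intro k
    rw [ST_integral (hpn k) (hMn k) (hmomn k)]
    refine (Finset.sum_le_sum fun t _ => Finset.sum_le_sum fun i _ => hC k t i).trans ?_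
    simp [hB]
  have hB0 : 0 ≤ B := (integral_nonneg (ST_nonneg 0)).trans (hle 0)
  set R : ℝ := (B + 1) / δ with hR
  have hRpos : 0 < R := by positivity
  refine ⟨Metric.closedBall 0 R, isCompact_closedBall _ _, fun k => ?_⟩
  have hsub : (Metric.closedBall (0 : Path T d) R)ᶜ ⊆ {x | R ≤ ST 0 x} := by
    intro x hx
    simp only [Set.mem_compl_iff, Metric.mem_closedBall, dist_zero_right, not_le] at hx
    refine hx.le.trans ?_
    rw [pi_norm_le_iff_of_nonneg (ST_nonneg _ _)]
    intro t
    rw [pi_norm_le_iff_of_nonneg (ST_nonneg _ _)]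
    intro i
    refine le_trans ?_ (tl_le_ST 0 x t i)
    simp [tl]
  refine (measure_mono hsub).trans ?_
  have hm := mul_meas_ge_le_integral_of_nonneg (μ := πs k) (ae_of_all _ (ST_nonneg 0))
    (ST_int (hpn k) (hMn k) (hmomn k) 0) R
  have h2 : (πs k).real {x | R ≤ ST 0 x} ≤ δ := by
    have h3 : R * (πs k).real {x | R ≤ ST 0 x} ≤ R * δ := by
      refine hm.trans ((hle k).trans ?_)
      rw [hR, div_mul_cancel₀ _ hδ.ne']; linarith
    exact le_of_mul_le_mul_left h3 hRpos
  rw [← ofReal_measureReal]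
  exact ENNReal.ofReal_le_ofReal h2

lemma subseq_of_tight {πs : ℕ → Measure (Path T d)}
    (hpi : ∀ k, IsProbabilityMeasure (πs k)) (ht : Tight πs) :
    ∃ π, WeakLimitPoint πs π := by
  let P : ℕ → ProbabilityMeasure (Path T d) := fun k => ⟨πs k, hpi k⟩
  have hc : IsCompact (closure (Set.range P)) := by
    apply isCompact_closure_of_isTightMeasureSet
    rw [isTightMeasureSet_iff_exists_isCompact_measure_compl_le]
    intro e he
    by_cases hetop : e = ⊤
    · exact ⟨∅, isCompact_empty, fun _ _ => by simp [hetop]⟩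
    obtain ⟨K, hK, h⟩ := ht e.toReal (ENNReal.toReal_pos he.ne' hetop)
    refine ⟨K, hK, ?_⟩
    rintro _ ⟨_, ⟨k, rfl⟩, rfl⟩
    have := h k
    rwa [ENNReal.ofReal_toReal hetop] at this
  obtain ⟨p, -, φ, hφ, hl⟩ := hc.tendsto_subseq (x := P) fun n => subset_closure ⟨n, rfl⟩
  refine ⟨p, φ, hφ, ?_⟩
  rw [ProbabilityMeasure.tendsto_iff_forall_integral_tendsto] at hl
  exact hl


end

section
variable {T d : ℕ}

lemma W1_set_nonempty (μ ν : Measure ℝ) [IsProbabilityMeasure μ] [IsProbabilityMeasure ν]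
    (hμ : Integrable (fun y : ℝ => y) μ) (hν : Integrable (fun y : ℝ => y) ν) :
    {r | ∃ γ : Measure (ℝ × ℝ), IsProbabilityMeasure γ ∧ γ.map Prod.fst = μ ∧
    γ.map Prod.snd = ν ∧ Integrable (fun p => |p.1 - p.2|) γ ∧
    r = ∫ p, |p.1 - p.2| ∂γ}.Nonempty := by
  refine ⟨_, μ.prod ν, inferInstance, ?_, ?_, ?_, rfl⟩
  · exact Measure.fst_prod
  · exact Measure.snd_prod
  · exact ((hμ.comp_fst ν).sub (hν.comp_snd μ)).abs

lemma W1_nonneg (μ ν : Measure ℝ) : 0 ≤ W1R μ ν := by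
  refine Real.sInf_nonneg ?_
  rintro r ⟨γ, -, -, -, -, rfl⟩
  exact integral_nonneg fun _ => abs_nonneg _

lemma W1_kr (μ ν : Measure ℝ) [IsProbabilityMeasure μ] [IsProbabilityMeasure ν]
    (hμ : Integrable (fun y : ℝ => y) μ) (hν : Integrable (fun y : ℝ => y) ν) :
    KR μ ν (W1R μ ν) := by
  intro g hg
  refine le_csInf (W1_set_nonempty μ ν hμ hν) ?_
  rintro r ⟨γ, hγ, h1, h2, hi, rfl⟩
  have e1 : ∫ y, g y ∂μ = ∫ p, g p.1 ∂γ := by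
    rw [← h1, integral_map measurable_fst.aemeasurable (lip_cont hg).aestronglyMeasurable]
  have e2 : ∫ y, g y ∂ν = ∫ p, g p.2 ∂γ := by
    rw [← h2, integral_map measurable_snd.aemeasurable (lip_cont hg).aestronglyMeasurable]
  have i1 : Integrable (fun p : ℝ × ℝ => g p.1) γ := by
    have := lip_int hg hμ
    rw [← h1] at this
    exact (integrable_map_measure (lip_cont hg).aestronglyMeasurable measurable_fst.aemeasurable).1 this
  have i2 : Integrable (fun p : ℝ × ℝ => g p.2) γ := by
    have := lip_int hg hν
    rw [← h2] at this
    exact (integrable_map_measure (lip_cont hg).aestronglyMeasurable measurable_snd.aemeasurable).1 this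
  rw [e1, e2, ← integral_sub i1 i2]
  have := norm_integral_le_of_norm_le (f := fun p : ℝ × ℝ => g p.1 - g p.2) hi
    (ae_of_all _ fun p => hg p.1 p.2)
  exact this

lemma measurable_pi_measure {α ι : Type*} [Fintype ι] [MeasurableSpace α] {X : ι → Type*}
    [∀ i, MeasurableSpace (X i)] (m : α → (i : ι) → Measure (X i))
    [∀ a i, IsProbabilityMeasure (m a i)] (hm : ∀ i, Measurable fun a => m a i) :
    Measurable fun a => Measure.pi (m a) := by
  refine Measurable.measure_of_isPiSystem_of_isProbabilityMeasure generateFrom_pi.symm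
    isPiSystem_pi ?_
  rintro _ ⟨s, hs, rfl⟩
  simp only [Measure.pi_pi]
  refine Finset.measurable_prod _ fun i _ => ?_
  exact (Measure.measurable_coe (hs i (Set.mem_univ i))).comp (hm i)

open ProbabilityTheory

noncomputable def KK (κ : Fin T → Fin d → Kernel ℝ ℝ) (hκ : ∀ t i, IsMarkovKernel (κ t i)) :
    Kernel (Path T d) (Path T d) where
  toFun x := Measure.pi fun t => Measure.pi fun i => κ t i (x t i)
  measurable' := by
    refine measurable_pi_measure (fun (x : Path T d) t => Measure.pi fun i => κ t i (x t i)) fun t => ?_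
    refine measurable_pi_measure (fun (x : Path T d) i => κ t i (x t i)) fun i => ?_
    exact (κ t i).measurable.comp (coord_meas t i)

lemma KK_apply (κ : Fin T → Fin d → Kernel ℝ ℝ) (hκ : ∀ t i, IsMarkovKernel (κ t i)) (x : Path T d) :
    KK κ hκ x = Measure.pi fun t => Measure.pi fun i => κ t i (x t i) := rfl

lemma KK_markov (κ : Fin T → Fin d → Kernel ℝ ℝ) (hκ : ∀ t i, IsMarkovKernel (κ t i)) :
    IsMarkovKernel (KK κ hκ) := ⟨fun x => by rw [KK_apply]; infer_instance⟩

lemma KK_coord (κ : Fin T → Fin d → Kernel ℝ ℝ) (hκ : ∀ t i, IsMarkovKernel (κ t i)) (x : Path T d)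
    (t : Fin T) (i : Fin d) : (KK κ hκ x).map (fun y => y t i) = κ t i (x t i) := by
  rw [KK_apply]
  have h1 := (measurePreserving_eval (fun t => Measure.pi fun i => κ t i (x t i)) t)
  have h2 := (measurePreserving_eval (fun i => κ t i (x t i)) i)
  exact (h2.comp h1).map_eq

lemma KK_cut (κ : Fin T → Fin d → Kernel ℝ ℝ) (hκ : ∀ t i, IsMarkovKernel (κ t i)) (x : Path T d)
    (t : ℕ) : (KK κ hκ x).map (cut T d t) = (KK κ hκ (cut T d t x)).map (cut T d t) := by
  have hf : ∀ s : Fin T, Measurable (fun v : Fin d → ℝ => if (s : ℕ) ≤ t then v else 0) := by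
    intro s; split_ifs <;> fun_prop
  have key : ∀ x : Path T d, (KK κ hκ x).map (cut T d t) = Measure.pi fun s : Fin T =>
      (Measure.pi fun i => κ s i (x s i)).map (fun v : Fin d → ℝ => if (s : ℕ) ≤ t then v else 0) := by
    intro x
    have (s : Fin T) : IsProbabilityMeasure ((Measure.pi fun i => κ s i (x s i)).map
        (fun v : Fin d → ℝ => if (s : ℕ) ≤ t then v else 0)) :=
      Measure.isProbabilityMeasure_map (hf s).aemeasurable
    rw [← Measure.pi_map_pi (fun s => (hf s).aemeasurable)]
    rfl
  rw [key, key]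
  congr 1
  ext1 s
  by_cases h : (s : ℕ) ≤ t
  · simp [cut, h]
  · simp only [h, if_false]
    rw [Measure.map_const, Measure.map_const]
    simp

lemma pair_law {π : Measure (Path T d)} [IsProbabilityMeasure π] {μ : Fin T → Fin d → Measure ℝ}
    (hM : HasMarginals π μ) (κ : Fin T → Fin d → Kernel ℝ ℝ) (hκ : ∀ t i, IsMarkovKernel (κ t i))
    (hp : ∀ t i, IsProbabilityMeasure (μ t i)) (t : Fin T) (i : Fin d) :
    (π ⊗ₘ KK κ hκ).map (fun p => (p.1 t i, p.2 t i)) = μ t i ⊗ₘ κ t i := by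
  have hmk := KK_markov κ hκ
  have hm : Measurable (fun p : Path T d × Path T d => (p.1 t i, p.2 t i)) :=
    ((coord_meas t i).comp measurable_fst).prodMk ((coord_meas t i).comp measurable_snd)
  ext s hs
  rw [Measure.map_apply hm hs, Measure.compProd_apply (hm hs), Measure.compProd_apply hs, ← hM t i,
    lintegral_map (Kernel.measurable_kernel_prodMk_left hs) (coord_meas t i)]
  refine lintegral_congr fun x => ?_
  rw [← KK_coord κ hκ x t i, Measure.map_apply (coord_meas t i) (measurable_prodMk_left hs)]
  rfl

lemma couple {π : Measure (Path T d)} {μ ν : Fin T → Fin d → Measure ℝ}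
    (hπ : π ∈ MartSet μ)
    (hp : ∀ t i, IsProbabilityMeasure (μ t i))
    (hmom : ∀ t i, Integrable (fun y : ℝ => y) (μ t i))
    (hpn : ∀ t i, IsProbabilityMeasure (ν t i))
    (hmomn : ∀ t i, Integrable (fun y : ℝ => y) (ν t i))
    (a : Fin T → Fin d → ℝ)
    (hγ : ∀ t i, ∃ γ : Measure (ℝ × ℝ), IsProbabilityMeasure γ ∧ γ.map Prod.fst = ν t i ∧
      γ.map Prod.snd = μ t i ∧ Integrable (fun p => |p.1 - p.2|) γ ∧ a t i = ∫ p, |p.1 - p.2| ∂γ)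
    {c : Path T d → ℝ} {L : ℝ} (hL : 0 ≤ L) (hc : LipschitzCost L c) :
    ∃ π' : Measure (Path T d), IsProbabilityMeasure π' ∧ HasMarginals π' ν ∧
      (∀ (t : ℕ) (ht : t + 1 < T),
        ∫ x, ∑ i, |condNext π' t ht i x - x ⟨t, Nat.lt_of_succ_lt ht⟩ i| ∂π' ≤
          ∑ i, (a ⟨t + 1, ht⟩ i + a ⟨t, Nat.lt_of_succ_lt ht⟩ i)) ∧
      |∫ x, c x ∂π' - ∫ x, c x ∂π| ≤ L * ∑ t, ∑ i, a t i := by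
  choose γ hγp hγ1 hγ2 hγi hγa using hγ
  obtain ⟨hπp, hM, hmart⟩ := hπ
  have hsw : ∀ t i, IsProbabilityMeasure ((γ t i).map Prod.swap) := fun t i =>
    Measure.isProbabilityMeasure_map measurable_swap.aemeasurable
  let κ : Fin T → Fin d → Kernel ℝ ℝ := fun t i => ((γ t i).map Prod.swap).condKernel
  have hκ : ∀ t i, IsMarkovKernel (κ t i) := fun t i => by simp only [κ]; infer_instance
  have hdis : ∀ t i, μ t i ⊗ₘ κ t i = (γ t i).map Prod.swap := by
    intro t i
    have h1 : ((γ t i).map Prod.swap).fst = μ t i := by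
      rw [Measure.fst, Measure.map_map measurable_fst measurable_swap, ← hγ2 t i]
      rfl
    have := ((γ t i).map Prod.swap).disintegrate ((γ t i).map Prod.swap).condKernel
    rw [h1] at this
    exact this
  have hmk := KK_markov κ hκ
  set Γ := π ⊗ₘ KK κ hκ with hΓ
  have hlaw : ∀ t i, Γ.map (fun p => (p.1 t i, p.2 t i)) = (γ t i).map Prod.swap := fun t i => by
    rw [← hdis]; exact pair_law hM κ hκ hp t i
  have hm : ∀ t i, Measurable (fun p : Path T d × Path T d => (p.1 t i, p.2 t i)) := fun t i =>
    ((coord_meas t i).comp measurable_fst).prodMk ((coord_meas t i).comp measurable_snd)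
  have habs : Measurable (fun q : ℝ × ℝ => |q.2 - q.1|) := by fun_prop
  have hint : ∀ t i, Integrable (fun p : Path T d × Path T d => |p.2 t i - p.1 t i|) Γ := by
    intro t i
    have h1 : Integrable (fun q : ℝ × ℝ => |q.2 - q.1|) ((γ t i).map Prod.swap) :=
      (integrable_map_measure habs.aestronglyMeasurable measurable_swap.aemeasurable).2 (hγi t i)
    rw [← hlaw] at h1
    exact (integrable_map_measure habs.aestronglyMeasurable (hm t i).aemeasurable).1 h1
  have hcost : ∀ t i, ∫ p, |p.2 t i - p.1 t i| ∂Γ = a t i := by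
    intro t i
    rw [hγa]
    have h1 : ∫ q, |q.2 - q.1| ∂((γ t i).map Prod.swap) = ∫ p, |p.1 - p.2| ∂(γ t i) :=
      integral_map measurable_swap.aemeasurable habs.aestronglyMeasurable
    rw [← h1, ← hlaw, integral_map (hm t i).aemeasurable habs.aestronglyMeasurable]
  have hfst : Γ.map Prod.fst = π := Measure.fst_compProd _ _
  have hΓp : IsProbabilityMeasure Γ := by rw [hΓ]; infer_instance
  have hMn : HasMarginals (Γ.map Prod.snd) ν := by
    intro t i
    rw [Measure.map_map (coord_meas t i) measurable_snd, ← hγ1 t i]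
    have h1 := congrArg (Measure.map Prod.snd) (hlaw t i)
    rw [Measure.map_map measurable_snd (hm t i), Measure.map_map measurable_snd measurable_swap] at h1
    exact h1
  have hπ' : IsProbabilityMeasure (Γ.map Prod.snd) :=
    Measure.isProbabilityMeasure_map measurable_snd.aemeasurable
  refine ⟨Γ.map Prod.snd, hπ', hMn, ?_, ?_⟩
  · intro t ht
    refine defect_le (coord_int hMn hmomn) t ht fun h hhc hb => ?_
    refine Finset.sum_le_sum fun i _ => ?_
    have hcm : Continuous (fun y => h i (cut T d t y)) := (hhc i).comp (cut_continuous T d t)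
    have hcm2 : Continuous (fun y => h i (cut T d t y) * incr t ht i y) := hcm.mul (incr_cont t ht i)
    rw [integral_map measurable_snd.aemeasurable hcm2.aestronglyMeasurable]
    have hincr1 : Integrable (fun p : Path T d × Path T d => incr t ht i p.1) Γ := by
      have h1 := incr_int (coord_int hM hmom) t ht i
      rw [← hfst] at h1
      exact (integrable_map_measure (incr_cont t ht i).aestronglyMeasurable measurable_fst.aemeasurable).1 h1
    have hincr2 : Integrable (fun p : Path T d × Path T d => incr t ht i p.2) Γ := by
      have h1 := incr_int (coord_int hMn hmomn) t ht i
      exact (integrable_map_measure (incr_cont t ht i).aestronglyMeasurable measurable_snd.aemeasurable).1 h1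
    have hbd : ∀ Y : Path T d × Path T d → ℝ, Integrable Y Γ →
        Integrable (fun p => h i (cut T d t p.2) * Y p) Γ := fun Y hY =>
      hY.bdd_mul (c := 1) ((hcm.comp continuous_snd).measurable.aestronglyMeasurable)
        (ae_of_all _ fun p => hb _ _)
    have hzero : ∫ p, h i (cut T d t p.2) * incr t ht i p.1 ∂Γ = 0 := by
      rw [hΓ, Measure.integral_compProd (by rw [← hΓ]; exact hbd _ hincr1)]
      simp only [integral_mul_const]
      set H : Path T d → ℝ := fun x => ∫ y, h i (cut T d t y) ∂(KK κ hκ x) with hH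
      have hHm : Measurable H :=
        (StronglyMeasurable.integral_kernel (κ := KK κ hκ)
          (f := fun y => h i (cut T d t y)) hcm.stronglyMeasurable).measurable
      have hHb : ∀ x, |H x| ≤ 1 := fun x => by
        have := norm_integral_le_of_norm_le (μ := KK κ hκ x) (f := fun y => h i (cut T d t y))
          (integrable_const (1 : ℝ)) (ae_of_all _ fun y => hb i _)
        simpa using this
      have hHc : ∀ x, H x = H (cut T d t x) := by
        intro x
        have e : ∀ x, H x = ∫ y, h i y ∂((KK κ hκ x).map (cut T d t)) := fun x => by
          rw [integral_map (cut_measurable T d t).aemeasurable (hhc i).aestronglyMeasurable]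
        rw [e, e, KK_cut]
      have := mart_test (coord_int hM hmom) hmart t ht i hHm hHb
      simpa only [← hHc] using this
    have hd := (hbd _ hincr2).sub (hbd _ hincr1)
    have hle : ∫ p, (h i (cut T d t p.2) * incr t ht i p.2 - h i (cut T d t p.2) * incr t ht i p.1) ∂Γ ≤
        ∫ p, (|p.2 ⟨t + 1, ht⟩ i - p.1 ⟨t + 1, ht⟩ i| +
          |p.2 ⟨t, Nat.lt_of_succ_lt ht⟩ i - p.1 ⟨t, Nat.lt_of_succ_lt ht⟩ i|) ∂Γ := by
      refine integral_mono hd ((hint _ i).add (hint _ i)) fun p => ?_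
      simp only
      rw [← mul_sub]
      refine (le_abs_self _).trans ?_
      rw [abs_mul]
      refine (mul_le_of_le_one_left (abs_nonneg _) (hb _ _)).trans ?_
      unfold incr
      rw [sub_sub_sub_comm]
      exact abs_sub _ _
    rw [integral_sub (hbd _ hincr2) (hbd _ hincr1), hzero,
      integral_add (hint _ i) (hint _ i), hcost, hcost, sub_zero] at hle
    exact hle
  · have hg := good_of_lip hL hc
    have i1 := hg.integrable hp hM hmom
    have i2 := hg.integrable hpn hMn hmomn
    rw [integral_map measurable_snd.aemeasurable hg.1.aestronglyMeasurable]
    have e : ∫ x, c x ∂π = ∫ p, c p.1 ∂Γ := by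
      conv_lhs => rw [← hfst]
      rw [integral_map measurable_fst.aemeasurable hg.1.aestronglyMeasurable]
    have j2 : Integrable (fun p : Path T d × Path T d => c p.2) Γ := (integrable_map_measure hg.1.aestronglyMeasurable measurable_snd.aemeasurable).1 i2
    have j1 : Integrable (fun p : Path T d × Path T d => c p.1) Γ := by
      rw [← hfst] at i1
      exact (integrable_map_measure hg.1.aestronglyMeasurable measurable_fst.aemeasurable).1 i1
    rw [e, ← integral_sub j2 j1]
    have hs : ∫ p, L * ∑ t, ∑ i, |p.2 t i - p.1 t i| ∂Γ = L * ∑ t, ∑ i, a t i := by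
      rw [integral_const_mul, integral_finsetSum _ fun t _ => integrable_finsetSum _ fun i _ => hint t i]
      congr 1
      refine Finset.sum_congr rfl fun t _ => ?_
      rw [integral_finsetSum _ fun i _ => hint t i]
      exact Finset.sum_congr rfl fun i _ => hcost t i
    rw [← hs]
    have := norm_integral_le_of_norm_le (μ := Γ) (f := fun p : Path T d × Path T d => c p.2 - c p.1)
      ((integrable_finsetSum Finset.univ fun t _ => integrable_finsetSum Finset.univ fun i _ => hint t i).const_mul L)
      (ae_of_all _ fun p => hc p.2 p.1)
    exact this


end

section
variable {T d : ℕ}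

lemma KR_refl (ν : Measure ℝ) : KR ν ν 0 := fun g _ => by simp

lemma tight_const {πs : ℕ → Measure (Path T d)} {ν : Fin T → Fin d → Measure ℝ}
    (hpi : ∀ k, IsProbabilityMeasure (πs k))
    (hpn : ∀ t i, IsProbabilityMeasure (ν t i))
    (hMn : ∀ k, HasMarginals (πs k) ν)
    (hmomn : ∀ t i, Integrable (fun y : ℝ => y) (ν t i)) : Tight πs := by
  refine tight_of (ν := fun _ => ν) hpi (fun _ => hpn) hMn (fun _ => hmomn)
    (C := ∑ t, ∑ i, ∫ y, tl 0 y ∂(ν t i)) fun k t i => ?_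
  have h0 : ∀ t i, 0 ≤ ∫ y, tl 0 y ∂(ν t i) := fun t i => integral_nonneg (tl_nonneg 0)
  exact (Finset.single_le_sum (f := fun i => ∫ y, tl 0 y ∂(ν t i)) (fun i _ => h0 t i)
    (Finset.mem_univ i)).trans
    (Finset.single_le_sum (f := fun t => ∑ i, ∫ y, tl 0 y ∂(ν t i))
      (fun t _ => Finset.sum_nonneg fun i _ => h0 t i) (Finset.mem_univ t))

lemma compact_const {πs : ℕ → Measure (Path T d)} {ν : Fin T → Fin d → Measure ℝ}
    {ε : ℕ → ℝ} {ε0 : ℝ} (hmem : ∀ k, πs k ∈ MartSetEps ν (ε k))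
    (hε : Tendsto ε atTop (nhds ε0))
    (hpn : ∀ t i, IsProbabilityMeasure (ν t i))
    (hmomn : ∀ t i, Integrable (fun y : ℝ => y) (ν t i))
    {c : Path T d → ℝ} {L : ℝ} (hL : 0 ≤ L) (hc : LipschitzCost L c) :
    ∃ π ∈ MartSetEps ν ε0, Integrable c π ∧ ∃ φ : ℕ → ℕ, StrictMono φ ∧
      Tendsto (fun k => ∫ x, c x ∂(πs (φ k))) atTop (nhds (∫ x, c x ∂π)) := by
  have ht := tight_const (fun k => (hmem k).1) hpn (fun k => (hmem k).2.1) hmomn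
  obtain ⟨π, φ, hφ, hw⟩ := subseq_of_tight (fun k => (hmem k).1) ht
  obtain ⟨h1, h2⟩ := weak_closed (πs := πs ∘ φ) (ν := fun _ => ν) (ε := ε ∘ φ)
    (fun k => hmem (φ k)) (hε.comp hφ.tendsto_atTop) (fun _ => hpn) (fun _ => hmomn) hpn hmomn
    (a := fun _ => 0) (fun _ t i => KR_refl _) tendsto_const_nhds hw
  obtain ⟨h3, h4⟩ := h2 (good_of_lip hL hc)
  exact ⟨π, h1, h3, φ, hφ, h4⟩

lemma relax_approx {π : Measure (Path T d)} {μ ν : Fin T → Fin d → Measure ℝ}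
    (hπ : π ∈ MartSet μ)
    (hp : ∀ t i, IsProbabilityMeasure (μ t i))
    (hmom : ∀ t i, Integrable (fun y : ℝ => y) (μ t i))
    (hpn : ∀ t i, IsProbabilityMeasure (ν t i))
    (hmomn : ∀ t i, Integrable (fun y : ℝ => y) (ν t i))
    {ε : ℝ} (hε : ∀ t, ∑ i, W1R (ν t i) (μ t i) ≤ ε / 2)
    {c : Path T d → ℝ} {L : ℝ} (hL : 0 ≤ L) (hc : LipschitzCost L c) :
    ∃ π' ∈ MartSetEps ν ε, Integrable c π' ∧
      |∫ x, c x ∂π' - ∫ x, c x ∂π| ≤ L * ∑ t, ∑ i, W1R (ν t i) (μ t i) := by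
  have key : ∀ k : ℕ, ∃ π' ∈ MartSetEps ν (ε + 2 * (d * (1 / ((k : ℝ) + 1)))),
      |∫ x, c x ∂π' - ∫ x, c x ∂π| ≤
        L * (∑ t, ∑ i, W1R (ν t i) (μ t i) + T * (d * (1 / ((k : ℝ) + 1)))) := by
    intro k
    have hδ : (0 : ℝ) < 1 / ((k : ℝ) + 1) := by positivity
    set δ : ℝ := 1 / ((k : ℝ) + 1)
    have hex : ∀ t i, ∃ a, (∃ γ : Measure (ℝ × ℝ), IsProbabilityMeasure γ ∧ γ.map Prod.fst = ν t i ∧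
      γ.map Prod.snd = μ t i ∧ Integrable (fun p => |p.1 - p.2|) γ ∧ a = ∫ p, |p.1 - p.2| ∂γ) ∧
        a < W1R (ν t i) (μ t i) + δ := fun t i =>
      exists_lt_of_csInf_lt (W1_set_nonempty _ _ (hmomn t i) (hmom t i)) (lt_add_of_pos_right _ hδ)
    choose a ha hlt using hex
    obtain ⟨π', h1, h2, h3, h4⟩ := couple hπ hp hmom hpn hmomn a ha hL hc
    have hsum : ∀ t, ∑ i, a t i ≤ ∑ i, W1R (ν t i) (μ t i) + d * δ := fun t => by
      refine (Finset.sum_le_sum fun i _ => (hlt t i).le).trans (le_of_eq ?_)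
      simp [Finset.sum_add_distrib]
    refine ⟨π', ⟨h1, h2, fun t ht => (h3 t ht).trans ?_⟩, h4.trans ?_⟩
    · rw [Finset.sum_add_distrib]
      have e1 := hsum ⟨t + 1, ht⟩
      have e2 := hsum ⟨t, Nat.lt_of_succ_lt ht⟩
      have e3 := hε ⟨t + 1, ht⟩
      have e4 := hε ⟨t, Nat.lt_of_succ_lt ht⟩
      linarith
    · refine mul_le_mul_of_nonneg_left ?_ hL
      refine (Finset.sum_le_sum fun t _ => hsum t).trans (le_of_eq ?_)
      simp [Finset.sum_add_distrib]
  choose πs hmem hle using key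
  have h0 : Tendsto (fun k : ℕ => 1 / ((k : ℝ) + 1)) atTop (nhds 0) :=
    tendsto_one_div_add_atTop_nhds_zero_nat
  have hεt : Tendsto (fun k : ℕ => ε + 2 * (d * (1 / ((k : ℝ) + 1)))) atTop (nhds ε) := by
    simpa using ((h0.const_mul (d : ℝ)).const_mul 2).const_add ε
  obtain ⟨π', h1, h2, φ, hφ, h3⟩ := compact_const hmem hεt hpn hmomn hL hc
  refine ⟨π', h1, h2, ?_⟩
  have hr : Tendsto (fun k : ℕ => L * (∑ t, ∑ i, W1R (ν t i) (μ t i) +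
      T * (d * (1 / ((k : ℝ) + 1))))) atTop (nhds (L * ∑ t, ∑ i, W1R (ν t i) (μ t i))) := by
    have := (((h0.const_mul (d : ℝ)).const_mul (T : ℝ)).const_add
      (∑ t, ∑ i, W1R (ν t i) (μ t i))).const_mul L
    rwa [mul_zero, mul_zero, add_zero] at this
  exact le_of_tendsto_of_tendsto' (h3.sub_const _).abs (hr.comp hφ.tendsto_atTop) fun k => hle (φ k)

lemma vals_bdd {ν : Fin T → Fin d → Measure ℝ} {ε : ℝ}
    (hpn : ∀ t i, IsProbabilityMeasure (ν t i))
    (hmomn : ∀ t i, Integrable (fun y : ℝ => y) (ν t i))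
    {c : Path T d → ℝ} {L : ℝ} (hL : 0 ≤ L) (hc : LipschitzCost L c) :
    BddAbove (primalVals c (MartSetEps ν ε)) := by
  obtain ⟨-, hA, hg⟩ := good_of_lip hL hc
  obtain ⟨g, hg⟩ := hg 0 le_rfl
  refine ⟨‖g‖ + L * ∑ t, ∑ i, ∫ y, tl 0 y ∂(ν t i), ?_⟩
  rintro r ⟨π, ⟨hp, hM, -⟩, hi, rfl⟩
  rw [← ST_integral hpn hM hmomn, ← integral_const_mul]
  have hS := (ST_int hpn hM hmomn 0).const_mul L
  have : ∫ x, c x ∂π ≤ ∫ x, (‖g‖ + L * ST 0 x) ∂π := by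
    refine integral_mono hi ((integrable_const _).add hS) fun x => ?_
    have h1 := (abs_le.1 (hg x)).2
    have h2 := (le_abs_self _).trans (g.norm_coe_le_norm x)
    simp only
    linarith
  rw [integral_add (integrable_const _) hS] at this
  simpa using this

lemma exists_opt {ν : Fin T → Fin d → Measure ℝ} {ε : ℝ}
    (hpn : ∀ t i, IsProbabilityMeasure (ν t i))
    (hmomn : ∀ t i, Integrable (fun y : ℝ => y) (ν t i))
    {c : Path T d → ℝ} {L : ℝ} (hL : 0 ≤ L) (hc : LipschitzCost L c)
    (hne : (primalVals c (MartSetEps ν ε)).Nonempty) :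
    ∃ π ∈ MartSetEps ν ε, Integrable c π ∧ ∫ x, c x ∂π = PbarEps ν c ε := by
  obtain ⟨u, -, hu, hmem⟩ := exists_seq_tendsto_sSup hne (vals_bdd hpn hmomn hL hc)
  choose πs h1 h2 h3 using hmem
  obtain ⟨π, h4, h5, φ, hφ, h6⟩ := compact_const h1 tendsto_const_nhds hpn hmomn hL hc
  refine ⟨π, h4, h5, ?_⟩
  refine tendsto_nhds_unique h6 ?_
  simp only [← h3]
  exact hu.comp hφ.tendsto_atTop

lemma main_max (hT : 0 < T)
    (μ : Fin T → Fin d → Measure ℝ)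
    (hprob : ∀ t i, IsProbabilityMeasure (μ t i))
    (hmom : ∀ t i, Integrable (fun y : ℝ => y) (μ t i))
    (hne : (MartSet μ).Nonempty)
    (μn : ℕ → Fin T → Fin d → Measure ℝ)
    (hprobn : ∀ n t i, IsProbabilityMeasure (μn n t i))
    (hmomn : ∀ n t i, Integrable (fun y : ℝ => y) (μn n t i))
    (r : ℕ → ℝ)
    (hrdef : ∀ n, r n = 2 * Finset.univ.sup' ⟨⟨0, hT⟩, Finset.mem_univ _⟩
      (fun t => ∑ i, W1R (μn n t i) (μ t i)))
    (hr0 : Tendsto r atTop (nhds 0))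
    (c : Path T d → ℝ) (L : ℝ) (hc : LipschitzCost L c)
    (ε : ℕ → ℝ) (hε0 : Tendsto ε atTop (nhds 0)) (hεr : ∀ n, r n ≤ ε n) :
    (∀ n, ∃ π ∈ MartSetEps (μn n) (ε n), Integrable c π ∧
      ∫ x, c x ∂π = PbarEps (μn n) c (ε n)) ∧
    (∀ πs : ℕ → Measure (Path T d),
      (∀ n, πs n ∈ MartSetEps (μn n) (ε n) ∧ Integrable c (πs n) ∧
        ∫ x, c x ∂(πs n) = PbarEps (μn n) c (ε n)) →
      Tight πs ∧
      (∀ π, WeakLimitPoint πs π →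
        π ∈ MartSet μ ∧ Integrable c π ∧ ∫ x, c x ∂π = Pbar μ c) ∧
      ((∃! π, π ∈ MartSet μ ∧ Integrable c π ∧ ∫ x, c x ∂π = Pbar μ c) →
        ∃ π, WeakTendsto πs π)) := by
  have hc : LipschitzCost |L| c := fun x y => (hc x y).trans
    (mul_le_mul_of_nonneg_right (le_abs_self L)
      (Finset.sum_nonneg fun _ _ => Finset.sum_nonneg fun _ _ => abs_nonneg _))
  have hL := abs_nonneg L
  generalize |L| = L at hc hL
  have hsum : ∀ n t, ∑ i, W1R (μn n t i) (μ t i) ≤ r n / 2 := fun n t => by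
    have := Finset.le_sup' (fun t => ∑ i, W1R (μn n t i) (μ t i)) (Finset.mem_univ t)
    rw [hrdef]
    linarith
  have hw1 : ∀ n t i, W1R (μn n t i) (μ t i) ≤ r n / 2 := fun n t i =>
    (Finset.single_le_sum (f := fun i => W1R (μn n t i) (μ t i)) (fun i _ => W1_nonneg _ _)
      (Finset.mem_univ i)).trans (hsum n t)
  have hkr : ∀ n t i, KR (μn n t i) (μ t i) (r n / 2) := fun n t i g hg =>
    (W1_kr _ _ (hmomn n t i) (hmom t i) g hg).trans (hw1 n t i)
  have hr2 : Tendsto (fun n => r n / 2) atTop (nhds 0) := by simpa using hr0.div_const 2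
  have happ : ∀ n, ∀ π ∈ MartSet μ, ∃ π' ∈ MartSetEps (μn n) (ε n), Integrable c π' ∧
      |∫ x, c x ∂π' - ∫ x, c x ∂π| ≤ L * ∑ t, ∑ i, W1R (μn n t i) (μ t i) := fun n π hπ =>
    relax_approx hπ hprob hmom (hprobn n) (hmomn n)
      (fun t => (hsum n t).trans (by linarith [hεr n])) hL hc
  refine ⟨fun n => ?_, fun πs hπs => ?_⟩
  · obtain ⟨π, hπ⟩ := hne
    obtain ⟨π', h1, h2, -⟩ := happ n π hπ
    exact exists_opt (hprobn n) (hmomn n) hL hc ⟨_, π', h1, h2, rfl⟩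
  have hpi : ∀ n, IsProbabilityMeasure (πs n) := fun n => (hπs n).1.1
  have htight : Tight πs := by
    obtain ⟨B, hB⟩ := hr2.bddAbove_range
    have h0 : ∀ t i, 0 ≤ ∫ y, tl 0 y ∂(μ t i) := fun t i => integral_nonneg (tl_nonneg 0)
    refine tight_of hpi hprobn (fun n => (hπs n).1.2.1) hmomn
      (C := ∑ t, ∑ i, ∫ y, tl 0 y ∂(μ t i) + B) fun k t i => ?_
    have h1 := (abs_le.1 (hkr k t i (tl 0) (tl_lip 0))).2
    have h2 : r k / 2 ≤ B := hB ⟨k, rfl⟩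
    have h3 := (Finset.single_le_sum (f := fun i => ∫ y, tl 0 y ∂(μ t i)) (fun i _ => h0 t i)
      (Finset.mem_univ i)).trans
      (Finset.single_le_sum (f := fun t => ∑ i, ∫ y, tl 0 y ∂(μ t i))
        (fun t _ => Finset.sum_nonneg fun i _ => h0 t i) (Finset.mem_univ t))
    linarith
  have hlimpt : ∀ π, WeakLimitPoint πs π →
        π ∈ MartSet μ ∧ Integrable c π ∧ ∫ x, c x ∂π = Pbar μ c := by
    rintro π ⟨φ, hφ, hw⟩
    obtain ⟨h1, h2⟩ := weak_closed (πs := πs ∘ φ) (ν := fun k => μn (φ k)) (ε := ε ∘ φ)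
      (fun k => (hπs (φ k)).1) (hε0.comp hφ.tendsto_atTop) (fun k => hprobn (φ k))
      (fun k => hmomn (φ k)) hprob hmom (a := fun k => r (φ k) / 2) (fun k => hkr (φ k))
      (hr2.comp hφ.tendsto_atTop) hw
    obtain ⟨hi, hlim⟩ := h2 (good_of_lip hL hc)
    have hmart := mart_of_eps (coord_int h1.2.1 hmom) h1
    refine ⟨hmart, hi, ?_⟩
    have hgr : IsGreatest (primalVals c (MartSet μ)) (∫ x, c x ∂π) := by
      refine ⟨⟨π, hmart, hi, rfl⟩, ?_⟩
      rintro _ ⟨ρ, hρ, -, rfl⟩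
      have hz : Tendsto (fun k => ∫ x, c x ∂((πs ∘ φ) k) + L * (T * (r (φ k) / 2))) atTop
          (nhds (∫ x, c x ∂π)) := by
        have := hlim.add (((hr2.comp hφ.tendsto_atTop).const_mul (T : ℝ)).const_mul L)
        simpa using this
      refine ge_of_tendsto' hz fun k => ?_
      obtain ⟨ρ', hρ', hρi, hle⟩ := happ (φ k) ρ hρ
      have e1 : ∫ x, c x ∂ρ' ≤ ∫ x, c x ∂((πs ∘ φ) k) := by
        simp only [Function.comp]
        rw [(hπs (φ k)).2.2]
        exact le_csSup (vals_bdd (hprobn _) (hmomn _) hL hc) ⟨ρ', hρ', hρi, rfl⟩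
      have e2 : ∑ t, ∑ i, W1R (μn (φ k) t i) (μ t i) ≤ T * (r (φ k) / 2) := by
        refine (Finset.sum_le_sum fun t _ => hsum (φ k) t).trans (le_of_eq ?_)
        simp
      have e3 := mul_le_mul_of_nonneg_left e2 hL
      have e4 := (abs_le.1 hle).1
      linarith
    exact hgr.csSup_eq.symm
  refine ⟨htight, hlimpt, ?_⟩
  rintro ⟨π, -, huniq⟩
  refine ⟨π, fun f => ?_⟩
  refine tendsto_of_subseq_tendsto fun ns hns => ?_
  obtain ⟨m, hm, hnm⟩ := strictMono_subseq_of_tendsto_atTop hns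
  have ht' : Tight (πs ∘ (ns ∘ m)) := fun δ hδ => by
    obtain ⟨K, hK, h⟩ := htight δ hδ
    exact ⟨K, hK, fun n => h _⟩
  obtain ⟨π', φ, hφ, hw⟩ := subseq_of_tight (fun k => hpi _) ht'
  have hπ' : π' = π := huniq π' (hlimpt π' ⟨(ns ∘ m) ∘ φ, hnm.comp hφ, hw⟩)
  subst hπ'
  exact ⟨m ∘ φ, hw f⟩

lemma vals_neg (c : Path T d → ℝ) (S : Set (Measure (Path T d))) :
    primalVals (fun x => - c x) S = - primalVals c S := by
  ext r
  simp only [primalVals, Set.mem_neg, Set.mem_setOf_eq, integrable_neg_iff, integral_neg]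
  refine exists_congr fun π => and_congr Iff.rfl ?_
  have : Integrable (fun x => - c x) π ↔ Integrable c π := integrable_neg_iff
  rw [this]
  exact and_congr Iff.rfl ⟨fun h => by rw [h]; ring, fun h => by rw [← h]; ring⟩

lemma PbarEps_neg (μ : Fin T → Fin d → Measure ℝ) (c : Path T d → ℝ) (ε : ℝ) :
    PbarEps μ (fun x => - c x) ε = - PlowEps μ c ε := by
  rw [PbarEps, PlowEps, vals_neg, Real.sSup_neg]

lemma Pbar_neg (μ : Fin T → Fin d → Measure ℝ) (c : Path T d → ℝ) :
    Pbar μ (fun x => - c x) = - Plow μ c := by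
  rw [Pbar, Plow, vals_neg, Real.sSup_neg]


end

/-- Theorem, part (ii): existence and convergence of optimizers.
Each relaxed problem `P̄_{ε_n}(μ̌ⁿ)` (resp. `P̲_{ε_n}(μ̌ⁿ)`) admits an optimizer `π_n`; any
sequence of optimizers is tight and every weak limit point is an optimizer of `P̄(μ̌)`
(resp. `P̲(μ̌)`); if the limiting problem has a unique optimizer, the sequence converges
weakly. -/
theorem mmot_lp_optimizers {T d : ℕ} (hT : 0 < T)
    (μ : Fin T → Fin d → Measure ℝ)
    (hprob : ∀ t i, IsProbabilityMeasure (μ t i))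
    (hmom : ∀ t i, Integrable (fun y : ℝ => y) (μ t i))
    (hne : (MartSet μ).Nonempty)
    (μn : ℕ → Fin T → Fin d → Measure ℝ)
    (hprobn : ∀ n t i, IsProbabilityMeasure (μn n t i))
    (hmomn : ∀ n t i, Integrable (fun y : ℝ => y) (μn n t i))
    (r : ℕ → ℝ)
    (hrdef : ∀ n, r n = 2 * Finset.univ.sup' ⟨⟨0, hT⟩, Finset.mem_univ _⟩
      (fun t => ∑ i, W1R (μn n t i) (μ t i)))
    (hr0 : Tendsto r atTop (nhds 0))
    (c : Path T d → ℝ) (L : ℝ) (hc : LipschitzCost L c)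
    (ε : ℕ → ℝ) (hε0 : Tendsto ε atTop (nhds 0)) (hεr : ∀ n, r n ≤ ε n) :
    -- existence of optimizers of the relaxed problems
    (∀ n, ∃ π ∈ MartSetEps (μn n) (ε n), Integrable c π ∧
      ∫ x, c x ∂π = PbarEps (μn n) c (ε n)) ∧
    (∀ n, ∃ π ∈ MartSetEps (μn n) (ε n), Integrable c π ∧
      ∫ x, c x ∂π = PlowEps (μn n) c (ε n)) ∧
    -- any sequence of optimizers of the maximization problems
    (∀ πs : ℕ → Measure (Path T d),
      (∀ n, πs n ∈ MartSetEps (μn n) (ε n) ∧ Integrable c (πs n) ∧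
        ∫ x, c x ∂(πs n) = PbarEps (μn n) c (ε n)) →
      Tight πs ∧
      (∀ π, WeakLimitPoint πs π →
        π ∈ MartSet μ ∧ Integrable c π ∧ ∫ x, c x ∂π = Pbar μ c) ∧
      ((∃! π, π ∈ MartSet μ ∧ Integrable c π ∧ ∫ x, c x ∂π = Pbar μ c) →
        ∃ π, WeakTendsto πs π)) ∧
    -- any sequence of optimizers of the minimization problems
    (∀ πs : ℕ → Measure (Path T d),
      (∀ n, πs n ∈ MartSetEps (μn n) (ε n) ∧ Integrable c (πs n) ∧
        ∫ x, c x ∂(πs n) = PlowEps (μn n) c (ε n)) →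
      Tight πs ∧
      (∀ π, WeakLimitPoint πs π →
        π ∈ MartSet μ ∧ Integrable c π ∧ ∫ x, c x ∂π = Plow μ c) ∧
      ((∃! π, π ∈ MartSet μ ∧ Integrable c π ∧ ∫ x, c x ∂π = Plow μ c) →
        ∃ π, WeakTendsto πs π)) := by
  have hcn : LipschitzCost L (fun x => - c x) := fun x y => by
    have h := hc x y
    rwa [neg_sub_neg, abs_sub_comm]
  obtain ⟨A1, A2⟩ := main_max hT μ hprob hmom hne μn hprobn hmomn r hrdef hr0 c L hc ε hε0 hεr
  obtain ⟨B1, B2⟩ := main_max hT μ hprob hmom hne μn hprobn hmomn r hrdef hr0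
    (fun x => - c x) L hcn ε hε0 hεr
  have hi : ∀ π : Measure (Path T d), Integrable (fun x => - c x) π ↔ Integrable c π :=
    fun π => integrable_neg_iff
  simp only [hi, integral_neg, PbarEps_neg, Pbar_neg, neg_inj] at B1 B2
  exact ⟨A1, B1, A2, B2⟩

end MMOT
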